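/- Let u ∈ F₂, let m ≥ 0 be an integer, let ψ₁ be a chain of type (C1) containing at least ‖u‖+1 factors of σ, and set ψ = τ^m σ ψ₁ (so that ψ is a chain of type (C1) containing at least ‖u‖+2 factors of σ). Then, as integers, ‖σψ(u)‖ − ‖ψ(u)‖ = ‖σ τ^m ψ₁(u)‖ − ‖τ^m ψ₁(u)‖ + m·(‖σψ₁(u)‖ − ‖ψ₁(u)‖). -/

import Mathlib

noncomputable section

/-- The free group of rank two. -/
abbrev F : Type := FreeGroup (Fin 2)

/-- The generator `a`. -/
def ga : F := FreeGroup.of 0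

/-- The generator `b`. -/
def gb : F := FreeGroup.of 1

/-- Build an automorphism of `F` from images of the generators together with
an explicit inverse. -/
def mkAut (x y xi yi : F)
    (h1 : FreeGroup.lift ![xi, yi] x = ga)
    (h2 : FreeGroup.lift ![xi, yi] y = gb)
    (h3 : FreeGroup.lift ![x, y] xi = ga)
    (h4 : FreeGroup.lift ![x, y] yi = gb) : MulAut F :=
  MonoidHom.toMulEquiv (FreeGroup.lift ![x, y]) (FreeGroup.lift ![xi, yi])
    (by
      ext i
      fin_cases i
      · simpa [ga] using h1
      · simpa [gb] using h2)
    (by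
      ext i
      fin_cases i
      · simpa [ga] using h3
      · simpa [gb] using h4)

/-- `σ : a ↦ ab, b ↦ b`. -/
def σ : MulAut F :=
  mkAut (ga * gb) gb (ga * gb⁻¹) gb
    (by simp [ga, gb]) (by simp [ga, gb]) (by simp [ga, gb]) (by simp [ga, gb])

/-- `τ : a ↦ a, b ↦ ba`. -/
def τ : MulAut F :=
  mkAut ga (gb * ga) ga (gb * ga⁻¹)
    (by simp [ga, gb]) (by simp [ga, gb]) (by simp [ga, gb]) (by simp [ga, gb])

/-- `δ₁ : a ↦ b⁻¹ab, b ↦ b`. -/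
def δ₁ : MulAut F :=
  mkAut (gb⁻¹ * ga * gb) gb (gb * ga * gb⁻¹) gb
    (by simp [ga, gb, mul_assoc]) (by simp [ga, gb]) (by simp [ga, gb, mul_assoc]) (by simp [ga, gb])

/-- `δ₂ : a ↦ bab⁻¹, b ↦ b`. -/
def δ₂ : MulAut F :=
  mkAut (gb * ga * gb⁻¹) gb (gb⁻¹ * ga * gb) gb
    (by simp [ga, gb, mul_assoc]) (by simp [ga, gb]) (by simp [ga, gb, mul_assoc]) (by simp [ga, gb])

/-- `δ₃ : a ↦ a, b ↦ a⁻¹ba`. -/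
def δ₃ : MulAut F :=
  mkAut ga (ga⁻¹ * gb * ga) ga (ga * gb * ga⁻¹)
    (by simp [ga, gb]) (by simp [ga, gb, mul_assoc]) (by simp [ga, gb]) (by simp [ga, gb, mul_assoc])

/-- `δ₄ : a ↦ a, b ↦ aba⁻¹`. -/
def δ₄ : MulAut F :=
  mkAut ga (ga * gb * ga⁻¹) ga (ga⁻¹ * gb * ga)
    (by simp [ga, gb]) (by simp [ga, gb, mul_assoc]) (by simp [ga, gb]) (by simp [ga, gb, mul_assoc])

/-- `π : a ↦ b, b ↦ a⁻¹`. -/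
def pi' : MulAut F :=
  mkAut gb ga⁻¹ gb⁻¹ ga
    (by simp [ga, gb]) (by simp [ga, gb]) (by simp [ga, gb]) (by simp [ga, gb])

/-- Word length of (the reduced word representing) an element of `F`. -/
def len (w : F) : ℕ := w.toWord.length

/-- Cyclic length: minimal word length among all conjugates. -/
def cyclen (w : F) : ℕ := sInf {n | ∃ g : F, len (g * w * g⁻¹) = n}

/-- The chain `τ^{m_k}σ^{l_k}⋯τ^{m_1}σ^{l_1}` of type (C1) determined by the list
`[(l_k, m_k), …, (l_1, m_1)]` of pairs of exponents. -/
def chainC1 (c : List (ℕ × ℕ)) : MulAut F :=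
  (c.map fun p => τ ^ p.2 * σ ^ p.1).prod

/-- The chain `τ^{-m_k}σ^{-l_k}⋯τ^{-m_1}σ^{-l_1}` of type (C2) determined by the list
`[(l_k, m_k), …, (l_1, m_1)]` of pairs of exponents. -/
def chainC2 (c : List (ℕ × ℕ)) : MulAut F :=
  (c.map fun p => (τ ^ p.2)⁻¹ * (σ ^ p.1)⁻¹).prod

/-- Number of factors of `σ` in a chain. -/
def sigmaCount (c : List (ℕ × ℕ)) : ℕ := (c.map Prod.fst).sum

/-- Number of factors of `τ` in a chain. -/
def tauCount (c : List (ℕ × ℕ)) : ℕ := (c.map Prod.snd).sum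

/-- The length `Σ (l_i + m_i)` of a chain. -/
def chainLen (c : List (ℕ × ℕ)) : ℕ := sigmaCount c + tauCount c

/-- A Whitehead automorphism of type (W1): it permutes `{a, a⁻¹, b, b⁻¹}`. -/
def IsW1 (β : MulAut F) : Prop :=
  β ga ∈ ({ga, ga⁻¹, gb, gb⁻¹} : Set F) ∧ β gb ∈ ({ga, ga⁻¹, gb, gb⁻¹} : Set F)

/-- A chain of type (C1). -/
def IsC1 (φ : MulAut F) : Prop := ∃ c : List (ℕ × ℕ), c ≠ [] ∧ φ = chainC1 c

/-- A chain of type (C2). -/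
def IsC2 (φ : MulAut F) : Prop := ∃ c : List (ℕ × ℕ), c ≠ [] ∧ φ = chainC2 c

/-- A positive element: a product of the generators `a` and `b`. -/
def IsPositive (w : F) : Prop := w ∈ Submonoid.closure ({ga, gb} : Set F)

/-- The four automorphisms `δ₁, δ₂, δ₃, δ₄`. -/
def δIdx : Fin 4 → MulAut F := ![δ₁, δ₂, δ₃, δ₄]

theorem cyclen_conj {w w' : F} (h : IsConj w w') : cyclen w = cyclen w' := by
  obtain ⟨c, hc⟩ := isConj_iff.1 h
  unfold cyclen
  congr 1
  ext n
  constructor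
  · rintro ⟨g, hg⟩
    refine ⟨g * c⁻¹, ?_⟩
    rw [← hg, ← hc]; congr 1; group
  · rintro ⟨g, hg⟩
    refine ⟨g * c, ?_⟩
    rw [← hg, ← hc]; congr 1; group

theorem cyclen_cr (M : List (Fin 2 × Bool)) (h : FreeGroup.IsCyclicallyReduced M) :
    cyclen (FreeGroup.mk M) = M.length := by
  have hlen : ∀ n : ℕ, len (FreeGroup.mk M ^ n) = n * M.length := by
    intro n
    rw [len, FreeGroup.toWord_pow, FreeGroup.toWord_mk, h.isReduced.reduce_eq,
      (h.flatten_replicate n).isReduced.reduce_eq]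
    simp
  have hmul : ∀ x y : F, len (x * y) ≤ len x + len y := fun x y => FreeGroup.norm_mul_le x y
  have hinv : ∀ x : F, len x⁻¹ = len x := fun x => FreeGroup.norm_inv_eq
  have hpow : ∀ (x : F) (n : ℕ), len (x ^ n) ≤ n * len x := by
    intro x n
    induction n with
    | zero => simp [len]
    | succ n ih =>
      rw [pow_succ]
      have := hmul (x ^ n) x
      nlinarith
  have key : ∀ g : F, M.length ≤ len (g * FreeGroup.mk M * g⁻¹) := by
    intro g
    by_contra! hlt
    set k := len (g * FreeGroup.mk M * g⁻¹) with hk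
    have h1 := hpow (g * FreeGroup.mk M * g⁻¹) (2 * len g + 1)
    have h2 : FreeGroup.mk M ^ (2 * len g + 1) =
        g⁻¹ * (g * FreeGroup.mk M * g⁻¹) ^ (2 * len g + 1) * g := by
      rw [conj_pow]; group
    have h3 := hlen (2 * len g + 1)
    rw [h2] at h3
    have h4 := hmul (g⁻¹ * (g * FreeGroup.mk M * g⁻¹) ^ (2 * len g + 1)) g
    have h5 := hmul g⁻¹ ((g * FreeGroup.mk M * g⁻¹) ^ (2 * len g + 1))
    rw [hinv] at h5
    rw [← hk] at h1
    nlinarith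
  apply le_antisymm
  · apply Nat.sInf_le
    exact ⟨1, by simpa using hlen 1⟩
  · apply le_csInf
    · exact ⟨_, 1, rfl⟩
    · rintro n ⟨g, rfl⟩
      exact key g

theorem exists_cr (u : F) : ∃ M, FreeGroup.IsCyclicallyReduced M ∧ IsConj u (FreeGroup.mk M) := by
  refine ⟨FreeGroup.reduceCyclically u.toWord,
    FreeGroup.reduceCyclically.isCyclicallyReduced FreeGroup.isReduced_toWord, ?_⟩
  apply IsConj.symm
  rw [isConj_iff]
  refine ⟨FreeGroup.mk (FreeGroup.reduceCyclically.conjugator u.toWord), ?_⟩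
  have := FreeGroup.reduceCyclically.conj_conjugator_reduceCyclically u.toWord
  conv_rhs => rw [← FreeGroup.mk_toWord (x := u), ← this]
  simp [FreeGroup.inv_mk, FreeGroup.mul_mk]

/-- A signed block: a sign and a positive word. -/
abbrev Blk : Type := Bool × List (Fin 2)

/-- The positive element spelled by a word. -/
def ev (X : List (Fin 2)) : F := (X.map FreeGroup.of).prod

/-- The element represented by a signed block. -/
def bval (e : Blk) : F := if e.1 then ev e.2 else (ev e.2)⁻¹

/-- The element represented by a list of signed blocks. -/
def lval (L : List Blk) : F := (L.map bval).prod

/-- Junction condition for consecutive blocks. -/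
def JW (e f : Blk) : Prop :=
  e.1 ≠ f.1 ∧ (e.2 = [] → f.2 ≠ []) ∧
    (e.1 = true → ∀ x ∈ e.2.getLast?, ∀ y ∈ f.2.getLast?, x ≠ y) ∧
    (e.1 = false → ∀ x ∈ e.2.head?, ∀ y ∈ f.2.head?, x ≠ y)

/-- Cyclic junction condition. -/
def CW (L : List Blk) : Prop := ∃ e l, L = e :: l ∧ List.IsChain JW (e :: (l ++ [e]))

/-- Sum of a statistic over all blocks. -/
def St (f : List (Fin 2) → ℕ) (L : List Blk) : ℕ := (L.map fun e => f e.2).sum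

/-- Indicator of the empty word. -/
def emp (X : List (Fin 2)) : ℕ := if X = [] then 1 else 0

/-- Number of letters in a pure `b` block. -/
def pb (X : List (Fin 2)) : ℕ := if X.count 0 = 0 then X.length else 0

/-- Words involving both letters. -/
def Mixed (X : List (Fin 2)) : Prop := ∀ x : Fin 2, x ∈ X

@[simp] theorem ev_nil : ev [] = 1 := rfl
@[simp] theorem ev_cons (x X) : ev (x :: X) = FreeGroup.of x * ev X := by simp [ev]
@[simp] theorem ev_append (X Y) : ev (X ++ Y) = ev X * ev Y := by simp [ev]
@[simp] theorem lval_nil : lval [] = 1 := rfl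
@[simp] theorem lval_cons (x X) : lval (x :: X) = bval x * lval X := by simp [lval]
@[simp] theorem lval_append (X Y) : lval (X ++ Y) = lval X * lval Y := by simp [lval]
@[simp] theorem St_nil (f) : St f [] = 0 := rfl
@[simp] theorem St_cons (f x X) : St f (x :: X) = f x.2 + St f X := by simp [St]
@[simp] theorem St_append (f X Y) : St f (X ++ Y) = St f X + St f Y := by simp [St]

theorem chain_rotate {e f : Blk} {l₁ l₂ : List Blk}
    (h : List.IsChain JW (f :: ((l₁ ++ e :: l₂) ++ [f]))) :
    List.IsChain JW (e :: ((l₂ ++ f :: l₁) ++ [e])) := by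
  rw [List.append_assoc, List.cons_append, List.isChain_cons_split] at h
  rw [List.append_assoc, List.cons_append, List.isChain_cons_split]
  exact ⟨h.2, h.1⟩

theorem chain_replace {R : Blk → Blk → Prop} {x x' y y' : Blk} {mid : List Blk} (hm : mid ≠ [])
    (h : List.IsChain R (x :: (mid ++ [y]))) (hx : ∀ z, R x z → R x' z)
    (hy : ∀ z, R z y → R z y') : List.IsChain R (x' :: (mid ++ [y'])) := by
  cases mid with
  | nil => exact absurd rfl hm
  | cons p q =>
    simp only [List.cons_append, List.isChain_cons_cons] at h ⊢
    refine ⟨hx _ h.1, ?_⟩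
    have h2 := h.2
    rw [← List.cons_append, List.isChain_append] at h2 ⊢
    refine ⟨h2.1, by simp, ?_⟩
    intro a ha b hb
    simp only [List.head?_cons, Option.mem_def, Option.some.injEq] at hb
    subst hb
    exact hy _ (h2.2.2 a ha y (by simp))

/-- Merge of two blocks of the same sign. -/
def mg (s : Bool) (X Y : List (Fin 2)) : List (Fin 2) := if s then X ++ Y else Y ++ X

theorem bval_mg (s X Y) : bval (s, mg s X Y) = bval (s, X) * bval (s, Y) := by
  cases s <;> simp [bval, mg]

theorem count_mg (s X Y x) : (mg s X Y).count x = X.count x + Y.count x := by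
  cases s <;> simp [mg, add_comm]

theorem length_mg (s X Y) : (mg s X Y).length = X.length + Y.length := by
  cases s <;> simp [mg, add_comm]

theorem mem_mg (s X Y x) : x ∈ mg s X Y ↔ x ∈ X ∨ x ∈ Y := by
  cases s <;> simp [mg, or_comm]

theorem mg_ne {s X Y} (hX : X ≠ []) : mg s X Y ≠ [] := by
  cases s <;> simp [mg, hX]

theorem merge {s' s₁ s₂ : Bool} {X Y : List (Fin 2)} {mid : List Blk}
    (h : List.IsChain JW ((s', []) :: (((s₁, Y) :: mid ++ [(s₂, X)]) ++ [(s', [])]))) :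
    s₁ = s₂ ∧ X ≠ [] ∧ Y ≠ [] ∧
      List.IsChain JW ((s₁, mg s₁ X Y) :: (mid ++ [(s₁, mg s₁ X Y)])) := by
  simp only [List.cons_append, List.append_assoc, List.nil_append] at h
  rw [List.isChain_cons_cons] at h
  obtain ⟨h1, h2⟩ := h
  rw [List.isChain_cons_split] at h2
  obtain ⟨h2, h3⟩ := h2
  rw [List.isChain_pair] at h3
  have hs : s₁ = s₂ := by
    have a1 := h1.1
    have a2 := h3.1
    revert a1 a2; cases s' <;> cases s₁ <;> cases s₂ <;> simp
  subst hs
  have hY : Y ≠ [] := h1.2.1 rfl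
  have hX : X ≠ [] := fun hh => h3.2.1 hh rfl
  refine ⟨rfl, hX, hY, ?_⟩
  have hm : mid ≠ [] := by
    rintro rfl
    simp [JW] at h2
  have hne : mg s₁ X Y ≠ [] := mg_ne hX
  refine chain_replace hm h2 ?_ ?_
  · rintro z ⟨z1, z2, z3, z4⟩
    refine ⟨z1, fun hh => absurd hh hne, ?_, ?_⟩
    · intro hs x hx
      simp only at hs
      subst hs
      simp only [mg, if_true] at hx
      rw [List.getLast?_append_of_ne_nil _ hY] at hx
      exact z3 rfl x hx
    · intro hs x hx
      simp only at hs
      subst hs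
      simp only [mg, Bool.false_eq_true, if_false] at hx
      rw [List.head?_append_of_ne_nil _ hY] at hx
      exact z4 rfl x hx
  · rintro z ⟨z1, z2, z3, z4⟩
    refine ⟨z1, fun _ => hne, ?_, ?_⟩
    · intro hs x hx y hy
      have : s₁ = false := by
        revert z1; simp only at hs ⊢; rw [hs]; cases s₁ <;> simp
      subst this
      simp only [mg, Bool.false_eq_true, if_false] at hy
      rw [List.getLast?_append_of_ne_nil _ hX] at hy
      exact z3 hs x hx y hy
    · intro hs x hx y hy
      have : s₁ = true := by
        revert z1; simp only at hs ⊢; rw [hs]; cases s₁ <;> simp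
      subst this
      simp only [mg, if_true] at hy
      rw [List.head?_append_of_ne_nil _ hX] at hy
      exact z4 hs x hx y hy

theorem pb_mg (s X Y) : pb (mg s X Y) ≤ pb X + pb Y := by
  unfold pb
  rw [count_mg, length_mg]
  split_ifs <;> omega

/-- Strict cyclic lists: no empty blocks. -/
def Strict (L : List Blk) : Prop := CW L ∧ ∀ e ∈ L, e.2 ≠ []

theorem normalizeL : ∀ (n : ℕ) (L : List Blk), L.length = n → CW L →
    (∃ s X, IsConj (lval L) (bval (s, X)) ∧ (∀ x, X.count x = St (List.count x) L) ∧
      L.length = 2 * St emp L) ∨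
    (∃ L', Strict L' ∧ IsConj (lval L) (lval L') ∧
      (∀ x, St (List.count x) L' = St (List.count x) L) ∧
      L'.length + 2 * St emp L = L.length ∧ St pb L' ≤ St pb L ∧
      ((∀ e ∈ L, e.2 ≠ [] → Mixed e.2) → ∀ e ∈ L', Mixed e.2)) := by
  intro n
  induction n using Nat.strong_induction_on with
  | _ n ih =>
  intro L hn hL
  by_cases hE : ∀ e ∈ L, e.2 ≠ []
  · right
    refine ⟨L, ⟨hL, hE⟩, IsConj.refl _, fun _ => rfl, ?_, le_rfl, fun h e he => h e he (hE e he)⟩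
    have : St emp L = 0 := by
      unfold St
      rw [List.sum_eq_zero]
      intro x hx
      simp only [List.mem_map] at hx
      obtain ⟨e, he, rfl⟩ := hx
      simp [emp, hE e he]
    omega
  · push Not at hE
    obtain ⟨e, he, he0⟩ := hE
    -- rotate so that the empty block comes first
    obtain ⟨l, hc, hconj, hperm⟩ : ∃ l, List.IsChain JW (e :: (l ++ [e])) ∧
        IsConj (lval L) (lval (e :: l)) ∧ L.Perm (e :: l) := by
      obtain ⟨f, t, rfl, hch⟩ := hL
      rcases List.mem_cons.1 he with rfl | he
      · exact ⟨t, hch, IsConj.refl _, List.Perm.refl _⟩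
      · obtain ⟨l₁, l₂, rfl⟩ := List.append_of_mem he
        refine ⟨l₂ ++ f :: l₁, chain_rotate hch, ?_, ?_⟩
        · rw [isConj_iff]
          refine ⟨(bval f * lval l₁)⁻¹, ?_⟩
          simp [mul_assoc]
        · rw [← List.cons_append, ← List.cons_append]
          exact List.perm_append_comm
    have hSt : ∀ f, St f L = St f (e :: l) := fun f => (hperm.map _).sum_eq
    have hlen := hperm.length_eq
    have hmem : ∀ x, x ∈ L ↔ x ∈ e :: l := fun x => hperm.mem_iff
    obtain ⟨s', E⟩ := e
    simp only at he0
    subst he0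
    have hb0 : bval (s', []) = 1 := by cases s' <;> simp [bval]
    rcases List.eq_nil_or_concat l with rfl | ⟨l', ⟨s₂, X⟩, rfl⟩
    · simp [JW] at hc
    rcases l' with _ | ⟨⟨s₁, Y⟩, mid⟩
    · left
      refine ⟨s₂, X, ?_, ?_, ?_⟩
      · simpa [hb0] using hconj
      · intro x; rw [hSt]; simp
      · rw [hSt, hlen]
        have : X ≠ [] := by
          simp [JW] at hc
          exact hc.1.2
        simp [emp, this]
    · rw [List.concat_eq_append] at *
      obtain ⟨rfl, hX, hY, hch⟩ := merge hc
      have hcon2 : IsConj (lval L) (lval ((s₁, mg s₁ X Y) :: mid)) := by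
        refine hconj.trans ?_
        rw [isConj_iff]
        refine ⟨bval (s₁, X), ?_⟩
        simp [hb0, bval_mg, mul_assoc]
      have hl2 : L.length = mid.length + 3 := by rw [hlen]; simp
      have hcount : ∀ x, St (List.count x) ((s₁, mg s₁ X Y) :: mid) = St (List.count x) L := by
        intro x; rw [hSt]; simp [count_mg]; omega
      have hemp : St emp L = St emp ((s₁, mg s₁ X Y) :: mid) + 1 := by
        rw [hSt]; simp [emp, hX, hY, mg_ne hX]; omega
      have hpb : St pb ((s₁, mg s₁ X Y) :: mid) ≤ St pb L := by
        rw [hSt]; simp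
        have := pb_mg s₁ X Y
        omega
      rcases ih (mid.length + 1) (by omega) ((s₁, mg s₁ X Y) :: mid) (by simp)
        ⟨_, _, rfl, hch⟩ with ⟨s, Z, h1, h2, h3⟩ | ⟨L', h1, h2, h3, h4, h5, h6⟩
      · left
        refine ⟨s, Z, hcon2.trans h1, fun x => (h2 x).trans (hcount x), ?_⟩
        simp only [List.length_cons] at h3
        omega
      · right
        refine ⟨L', h1, hcon2.trans h2, fun x => (h3 x).trans (hcount x), ?_, h5.trans hpb, ?_⟩
        · simp only [List.length_cons] at h4
          omega
        · intro hM
          apply h6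
          intro e he hne
          rcases List.mem_cons.1 he with rfl | he
          · intro x
            rw [mem_mg]
            left
            exact hM (s₁, X) ((hmem _).2 (by simp)) hX x
          · exact hM e ((hmem _).2 (by simp [he])) hne
/-- Letters of a block. -/
def fl (e : Blk) : List (Fin 2 × Bool) :=
  if e.1 then e.2.map (fun x => (x, true)) else (e.2.reverse).map (fun x => (x, false))

theorem mk_pos (X : List (Fin 2)) : FreeGroup.mk (X.map (fun x => (x, true))) = ev X := by
  induction X with
  | nil => rfl
  | cons x X ih =>
    rw [ev_cons, ← ih, List.map_cons]
    rfl

theorem mk_fl (e : Blk) : FreeGroup.mk (fl e) = bval e := by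
  obtain ⟨s, X⟩ := e
  cases s
  · simp only [fl, bval, Bool.false_eq_true, if_false]
    rw [← mk_pos, FreeGroup.inv_mk]
    congr 1
    simp [FreeGroup.invRev, List.map_reverse]
  · simp only [fl, bval, if_true]
    exact mk_pos X

theorem mk_flatten (L : List Blk) : FreeGroup.mk (L.map fl).flatten = lval L := by
  induction L with
  | nil => rfl
  | cons e L ih =>
    rw [List.map_cons, List.flatten_cons, ← FreeGroup.mul_mk, ih, mk_fl, lval_cons]

theorem length_fl (e : Blk) : (fl e).length = e.2.length := by
  unfold fl; split_ifs <;> simp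

theorem length_flatten_fl (L : List Blk) : (L.map fl).flatten.length = St List.length L := by
  induction L with
  | nil => rfl
  | cons e L ih => simp [length_fl, ← ih]

theorem isReduced_fl (e : Blk) : FreeGroup.IsReduced (fl e) := by
  apply List.Pairwise.isChain
  unfold fl
  split_ifs
  · rw [List.pairwise_map]; exact List.pairwise_of_forall (by simp)
  · rw [List.pairwise_map]; exact List.pairwise_of_forall (by simp)

theorem fl_ne {e : Blk} (h : e.2 ≠ []) : fl e ≠ [] := by
  rw [← List.length_pos_iff, length_fl]; exact List.length_pos_iff.2 h

theorem fl_junction {e f : Blk} (h : JW e f) :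
    ∀ x ∈ (fl e).getLast?, ∀ y ∈ (fl f).head?, x.1 = y.1 → x.2 = y.2 := by
  obtain ⟨s, X⟩ := e
  obtain ⟨s', Y⟩ := f
  obtain ⟨h1, -, h3, h4⟩ := h
  cases s <;> cases s' <;> simp_all [fl]

theorem cyclen_strict {L : List Blk} (h : Strict L) : cyclen (lval L) = St List.length L := by
  rw [← mk_flatten, ← length_flatten_fl]
  apply cyclen_cr
  obtain ⟨⟨e, l, rfl, hc⟩, hne⟩ := h
  have hc' : List.IsChain (fun a b : Fin 2 × Bool => a.1 = b.1 → a.2 = b.2)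
      (((e :: l) ++ [e]).map fl).flatten := by
    rw [List.isChain_flatten]
    · constructor
      · intro l hl
        simp only [List.mem_map] at hl
        obtain ⟨f, -, rfl⟩ := hl
        exact isReduced_fl f
      · rw [List.isChain_map]
        exact List.IsChain.imp (fun _ _ => fl_junction) hc
    · intro h0
      simp only [List.mem_map] at h0
      obtain ⟨f, hf, hf0⟩ := h0
      refine fl_ne (hne f ?_) hf0
      simpa [or_comm] using hf
  rw [List.map_append, List.flatten_append, List.isChain_append] at hc'
  refine ⟨hc'.1, ?_⟩
  intro a ha b hb
  refine hc'.2.2 a ha b ?_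
  have := fl_ne (hne e (by simp))
  simpa [List.head?_append_of_ne_nil _ this] using hb

theorem cyclen_single (s : Bool) (X : List (Fin 2)) : cyclen (bval (s, X)) = X.length := by
  rw [← mk_fl, cyclen_cr, length_fl]
  refine ⟨isReduced_fl _, ?_⟩
  intro a ha b hb _
  have h1 := List.mem_of_mem_getLast? ha
  have h2 := List.mem_of_mem_head? hb
  unfold fl at h1 h2
  cases s <;> grind

/-- Singleton blocks of consecutive letters, separated by empty blocks where necessary. -/
def fx (x y : Fin 2 × Bool) : List Blk :=
  if x.2 = y.2 then [(x.2, [x.1]), (!x.2, [])] else [(x.2, [x.1])]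

/-- Block list of a cyclic letter list. -/
def gx : Fin 2 × Bool → List (Fin 2 × Bool) → Fin 2 × Bool → List Blk
  | x, [], z => fx x z
  | x, y :: l, z => fx x y ++ gx y l z

theorem lval_fx (x y) : lval (fx x y) = FreeGroup.mk [x] := by
  obtain ⟨i, s⟩ := x
  unfold fx
  cases s <;> split_ifs <;> simp [bval, FreeGroup.of, FreeGroup.inv_mk, FreeGroup.invRev]

theorem lval_gx (x l z) : lval (gx x l z) = FreeGroup.mk (x :: l) := by
  induction l generalizing x with
  | nil => exact lval_fx x z
  | cons y l ih =>
    rw [gx, lval_append, lval_fx, ih, FreeGroup.mul_mk]; rfl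

theorem gx_head (x l z) : ∃ t, gx x l z = (x.2, [x.1]) :: t := by
  cases l with
  | nil => unfold gx fx; split_ifs <;> simp
  | cons y l => unfold gx fx; split_ifs <;> simp

theorem fx_chain {x y : Fin 2 × Bool} (h : x.1 = y.1 → x.2 = y.2) {t : List Blk}
    (ht : List.IsChain JW ((y.2, [y.1]) :: t)) : List.IsChain JW (fx x y ++ (y.2, [y.1]) :: t) := by
  unfold fx
  split_ifs with hs
  · simp only [List.cons_append, List.nil_append, List.isChain_cons_cons]
    refine ⟨?_, ?_, ht⟩
    · simp [JW]
    · simp [JW, hs]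
  · simp only [List.cons_append, List.nil_append, List.isChain_cons_cons]
    refine ⟨?_, ht⟩
    have : x.1 ≠ y.1 := fun h' => hs (h h')
    simp [JW, hs, this]

theorem gx_chain (x l z) (h : List.IsChain (fun a b : Fin 2 × Bool => a.1 = b.1 → a.2 = b.2)
      (x :: (l ++ [z]))) : List.IsChain JW (gx x l z ++ [(z.2, [z.1])]) := by
  induction l generalizing x with
  | nil =>
    simp only [List.nil_append, List.isChain_pair] at h
    exact fx_chain h (List.isChain_singleton _)
  | cons y l ih =>
    simp only [List.cons_append, List.isChain_cons_cons] at h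
    obtain ⟨t, ht⟩ := gx_head y l z
    have := ih y h.2
    rw [gx, List.append_assoc]
    rw [ht] at this ⊢
    exact fx_chain h.1 this

theorem exists_weak (u : F) : u = 1 ∨ (∃ L, CW L ∧ IsConj u (lval L)) ∨ IsConj u 1 := by
  obtain ⟨M, hM, hu⟩ := exists_cr u
  cases M with
  | nil => right; right; exact hu
  | cons x l =>
    right; left
    have hch : List.IsChain (fun a b : Fin 2 × Bool => a.1 = b.1 → a.2 = b.2)
      (x :: (l ++ [x])) := by
      rw [← List.cons_append, List.isChain_append]
      refine ⟨hM.1, by simp, ?_⟩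
      intro a ha b hb
      exact hM.2 a ha b (by simpa using hb)
    have h2 := gx_chain x l x hch
    refine ⟨gx x l x, ?_, by rw [lval_gx]; exact hu⟩
    obtain ⟨t, ht⟩ := gx_head x l x
    exact ⟨_, t, ht, by rw [ht] at h2; exact h2⟩

/-- `u` is conjugate to a positive or a negative element. -/
def Pos (u : F) : Prop := ∃ s X, IsConj u (bval (s, X))

theorem exists_rep (u : F) : Pos u ∨ ∃ L, Strict L ∧ IsConj u (lval L) := by
  have h1 : IsConj u 1 → Pos u := fun h => ⟨true, [], by simpa [bval] using h⟩
  rcases exists_weak u with rfl | ⟨L, hL, hu⟩ | h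
  · exact Or.inl (h1 (IsConj.refl _))
  · rcases normalizeL _ L rfl hL with ⟨s, X, h, -⟩ | ⟨L', h, h', -⟩
    · exact Or.inl ⟨s, X, hu.trans h⟩
    · exact Or.inr ⟨L', h, hu.trans h'⟩
  · exact Or.inl (h1 h)
/-- `ρ 0 = τ`, `ρ 1 = σ`. -/
def rho (c : Fin 2) : MulAut F := if c = 0 then τ else σ

theorem rho_of (c x : Fin 2) :
    rho c (FreeGroup.of x) =
      if x = c then FreeGroup.of c else FreeGroup.of x * FreeGroup.of c := by
  fin_cases c <;> fin_cases x <;> simp [rho, σ, τ, mkAut, ga, gb]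

/-- Image of a positive word. -/
def im (c : Fin 2) : List (Fin 2) → List (Fin 2)
  | [] => []
  | x :: l => (if x = c then [c] else [x, c]) ++ im c l

/-- Image of a positive word, with the last letter dropped. -/
def tr (c : Fin 2) : List (Fin 2) → List (Fin 2)
  | [] => []
  | [x] => if x = c then [] else [x]
  | x :: y :: l => (if x = c then [c] else [x, c]) ++ tr c (y :: l)

theorem rho_ev_im (c X) : rho c (ev X) = ev (im c X) := by
  induction X with
  | nil => simp [im]
  | cons x l ih =>
    rw [im, ev_cons, map_mul, ih, rho_of, ev_append]
    split_ifs <;> simp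

theorem count_im (c X) : (im c X).count c = X.length := by
  induction X with
  | nil => simp [im]
  | cons x l ih =>
    rw [im, List.count_append, ih]
    split_ifs with h <;> simp [h] <;> omega

theorem count_im' (c x X) (hx : x ≠ c) : (im c X).count x = X.count x := by
  induction X with
  | nil => simp [im]
  | cons y l ih =>
    rw [im, List.count_append, ih]
    split_ifs with h <;> grind

theorem rho_ev_tr (c X) (hX : X ≠ []) : rho c (ev X) = ev (tr c X) * FreeGroup.of c := by
  fun_induction tr c X with
  | case1 => simp at hX
  | case2 => simp [rho_of]
  | case3 x h => simp [rho_of, h]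
  | case4 x y l ih =>
    rw [ev_cons, map_mul, ih (by simp), rho_of, ev_append]
    split_ifs <;> simp [mul_assoc]

theorem count_tr (c X) (hX : X ≠ []) : (tr c X).count c + 1 = X.length := by
  fun_induction tr c X with
  | case1 => simp at hX
  | case2 => simp
  | case3 x h => simp [h]
  | case4 x y l ih =>
    have := ih (by simp)
    rw [List.count_append]
    split_ifs with h <;> simp [h] at * <;> omega

theorem count_tr' (c x X) (hx : x ≠ c) : (tr c X).count x = X.count x := by
  fun_induction tr c X with
  | case1 => simp
  | case2 => grind
  | case3 y h => simp
  | case4 y z l ih =>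
    rw [List.count_append, ih]
    split_ifs with h <;> grind

theorem tr_eq_nil {c X} (h : tr c X = []) (hX : X ≠ []) : X = [c] := by
  fun_induction tr c X with
  | case1 => simp at hX
  | case2 => rfl
  | case3 y h' => simp at h
  | case4 y z l ih => split_ifs at h <;> simp at h

theorem tr_head {c X} (h : tr c X ≠ []) : (tr c X).head? = X.head? := by
  fun_induction tr c X with
  | case1 => simp
  | case2 => simp at h
  | case3 y h' => simp
  | case4 y z l ih => split_ifs with h' <;> simp [h']

theorem tr_getLast {c X} (h : tr c X ≠ []) : (tr c X).getLast? = X.getLast? := by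
  fun_induction tr c X with
  | case1 => simp
  | case2 => simp at h
  | case3 y h' => simp
  | case4 y z l ih =>
    by_cases h0 : tr c (z :: l) = []
    · have := tr_eq_nil h0 (by simp)
      rw [h0]
      simp only [List.cons.injEq] at this
      obtain ⟨rfl, rfl⟩ := this
      split_ifs with h' <;> simp
    · rw [List.getLast?_append_of_ne_nil _ h0, ih h0]
      simp

/-- Image of a list of blocks. -/
def tL (c : Fin 2) (L : List Blk) : List Blk := L.map fun e => (e.1, tr c e.2)

theorem JW_tr {c : Fin 2} {e f : Blk} (h : JW e f) (he : e.2 ≠ []) (hf : f.2 ≠ []) :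
    JW (e.1, tr c e.2) (f.1, tr c f.2) := by
  obtain ⟨h1, h2, h3, h4⟩ := h
  refine ⟨h1, ?_, ?_, ?_⟩
  · intro h5 h6
    simp only at h5 h6
    have h5 := tr_eq_nil h5 he
    have h6 := tr_eq_nil h6 hf
    rw [h5, h6] at h3 h4
    cases hs : e.1
    · exact h4 hs c (by simp) c (by simp) rfl
    · exact h3 hs c (by simp) c (by simp) rfl
  · intro hs x hx y hy
    simp only at hs hx hy
    rw [tr_getLast (by rintro h0; simp [h0] at hx)] at hx
    rw [tr_getLast (by rintro h0; simp [h0] at hy)] at hy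
    exact h3 hs x hx y hy
  · intro hs x hx y hy
    simp only at hs hx hy
    rw [tr_head (by rintro h0; simp [h0] at hx)] at hx
    rw [tr_head (by rintro h0; simp [h0] at hy)] at hy
    exact h4 hs x hx y hy

theorem CW_tL {L : List Blk} (c : Fin 2) (h : Strict L) : CW (tL c L) := by
  obtain ⟨⟨e, l, rfl, hc⟩, hne⟩ := h
  refine ⟨(e.1, tr c e.2), tL c l, rfl, ?_⟩
  have : (e.1, tr c e.2) :: (tL c l ++ [(e.1, tr c e.2)]) =
      (e :: (l ++ [e])).map (fun e => (e.1, tr c e.2)) := by simp [tL]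
  rw [this, List.isChain_map]
  refine List.IsChain.imp_of_mem_imp ?_ hc
  intro a b ha hb hab
  exact JW_tr hab (hne a (by simpa [or_comm] using ha)) (hne b (by simpa [or_comm] using hb))

/-- Left correction term. -/
def lc (c : Fin 2) (s : Bool) : F := if s then 1 else (FreeGroup.of c)⁻¹
/-- Right correction term. -/
def rc (c : Fin 2) (s : Bool) : F := if s then FreeGroup.of c else 1

theorem rc_lc {c : Fin 2} {s s' : Bool} (h : s ≠ s') : rc c s * lc c s' = 1 := by
  cases s <;> cases s' <;> simp_all [rc, lc]

theorem rho_bval (c : Fin 2) (e : Blk) (he : e.2 ≠ []) :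
    rho c (bval e) = lc c e.1 * bval (e.1, tr c e.2) * rc c e.1 := by
  obtain ⟨s, X⟩ := e
  cases s <;> simp [bval, lc, rc, rho_ev_tr c X he]

theorem rho_linear (c : Fin 2) (e : Blk) (l : List Blk) (z : Blk)
    (hc : List.IsChain JW (e :: (l ++ [z]))) (he : e.2 ≠ []) (hl : ∀ f ∈ l, f.2 ≠ []) :
    rho c (lval (e :: l)) * lc c z.1 = lc c e.1 * lval (tL c (e :: l)) := by
  induction l generalizing e with
  | nil =>
    simp only [List.nil_append, List.isChain_pair] at hc
    simp [tL, rho_bval c e he, mul_assoc, rc_lc hc.1]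
  | cons f l ih =>
    simp only [List.cons_append, List.isChain_cons_cons] at hc
    have := ih f hc.2 (hl f (by simp)) (fun g hg => hl g (by simp [hg]))
    rw [lval_cons, map_mul, mul_assoc, this, rho_bval c e he]
    have h2 : tL c (e :: f :: l) = (e.1, tr c e.2) :: tL c (f :: l) := rfl
    rw [h2, lval_cons]
    have h3 := rc_lc (c := c) hc.1.1
    calc _ = lc c e.1 * bval (e.1, tr c e.2) * (rc c e.1 * lc c f.1) * lval (tL c (f :: l)) := by
          group
      _ = _ := by rw [h3]; group

theorem rho_lval {L : List Blk} (c : Fin 2) (h : Strict L) :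
    IsConj (rho c (lval L)) (lval (tL c L)) := by
  obtain ⟨⟨e, l, rfl, hc⟩, hne⟩ := h
  have := rho_linear c e l e hc (hne e (by simp)) (fun f hf => hne f (by simp [hf]))
  rw [isConj_iff]
  refine ⟨(lc c e.1)⁻¹, ?_⟩
  rw [inv_inv, mul_assoc, this]
  group

theorem rho_conj {w w' : F} (c : Fin 2) (h : IsConj w w') : IsConj (rho c w) (rho c w') := by
  obtain ⟨g, rfl⟩ := isConj_iff.1 h
  exact isConj_iff.2 ⟨rho c g, by simp⟩

theorem rho_single (c s X) : rho c (bval (s, X)) = bval (s, im c X) := by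
  cases s <;> simp [bval, rho_ev_im]

theorem len_count (X : List (Fin 2)) : X.length = X.count 0 + X.count 1 := by
  induction X with
  | nil => rfl
  | cons x l ih =>
    fin_cases x <;> simp [ih] <;> omega

theorem St_congr {f g : List (Fin 2) → ℕ} {L : List Blk} (h : ∀ e ∈ L, f e.2 = g e.2) :
    St f L = St g L := by
  unfold St
  rw [List.map_congr_left h]

theorem St_tL (f c L) : St f (tL c L) = St (fun X => f (tr c X)) L := by
  simp [St, tL, Function.comp_def]

theorem St_length (L) : St List.length L = St (List.count 0) L + St (List.count 1) L := by
  induction L with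
  | nil => rfl
  | cons e l ih => simp [ih, len_count e.2]; omega

theorem St_count_tL {c L} (h : ∀ e ∈ L, e.2 ≠ []) :
    St (List.count c) (tL c L) + L.length = St (List.count 0) L + St (List.count 1) L := by
  rw [← St_length, St_tL]
  induction L with
  | nil => rfl
  | cons e l ih =>
    have h1 := ih (fun f hf => h f (by simp [hf]))
    have h2 := count_tr c e.2 (h e (by simp))
    simp only [St_cons, List.length_cons]
    omega

theorem St_count_tL' {c x L} (hx : x ≠ c) :
    St (List.count x) (tL c L) = St (List.count x) L := by
  rw [St_tL]
  exact St_congr fun e _ => count_tr' c x e.2 hx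
/-- Representation as a single block with given letter counts. -/
def SR (w : F) (A b : ℤ) : Prop :=
  ∃ s X, IsConj w (bval (s, X)) ∧ (X.count 0 : ℤ) = A ∧ (X.count 1 : ℤ) = b

/-- Representation by a strict list of blocks with given letter and block counts. -/
def LR (w : F) (A b B : ℤ) (L : List Blk) : Prop :=
  Strict L ∧ IsConj w (lval L) ∧ (St (List.count 0) L : ℤ) = A ∧ (St (List.count 1) L : ℤ) = b ∧
    (L.length : ℤ) = B

/-- Indicator of the word `a`. -/
def isA (X : List (Fin 2)) : ℕ := if X = [0] then 1 else 0

/-- Representation with mixed blocks only. -/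
def MR (w : F) (A b B : ℤ) : Prop :=
  (B = 0 ∧ SR w A b) ∨ ∃ L, LR w A b B L ∧ ∀ e ∈ L, Mixed e.2

/-- Representation with blocks mixed or equal to `a`. -/
def NR (w : F) (A b B α : ℤ) : Prop :=
  (B = 0 ∧ α = 0 ∧ SR w A b) ∨
    ∃ L, LR w A b B L ∧ (∀ e ∈ L, e.2 = [0] ∨ Mixed e.2) ∧ (St isA L : ℤ) = α

theorem rho_zero : rho 0 = τ := rfl
theorem rho_one : rho 1 = σ := rfl

theorem SR_cyclen {w A b} (h : SR w A b) : (cyclen w : ℤ) = A + b := by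
  obtain ⟨s, X, h, rfl, rfl⟩ := h
  rw [cyclen_conj h, cyclen_single, len_count]; push_cast; rfl

theorem SR_tau {w A b} (h : SR w A b) : SR (τ w) (A + b) b := by
  obtain ⟨s, X, h, rfl, rfl⟩ := h
  refine ⟨s, im 0 X, ?_, ?_, ?_⟩
  · rw [← rho_single]; exact rho_conj 0 h
  · rw [count_im, len_count]; push_cast; rfl
  · rw [count_im' _ _ _ (by decide)]

theorem SR_sigma {w A b} (h : SR w A b) : SR (σ w) A (b + A) := by
  obtain ⟨s, X, h, rfl, rfl⟩ := h
  refine ⟨s, im 1 X, ?_, ?_, ?_⟩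
  · rw [← rho_single]; exact rho_conj 1 h
  · rw [count_im' _ _ _ (by decide)]
  · rw [count_im, len_count]; push_cast; ring

theorem LR_cyclen {w A b B L} (h : LR w A b B L) : (cyclen w : ℤ) = A + b := by
  obtain ⟨h1, h2, rfl, rfl, rfl⟩ := h
  rw [cyclen_conj h2, cyclen_strict h1, St_length]; push_cast; rfl

theorem LR_step {w A b B L} (c : Fin 2) (h : LR w A b B L) (hne : ∀ e ∈ L, e.2 ≠ [c]) :
    LR (rho c w) (if c = 0 then A + b - B else A) (if c = 0 then b else b + A - B) B (tL c L) := by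
  obtain ⟨h1, h2, rfl, rfl, rfl⟩ := h
  refine ⟨⟨CW_tL c h1, ?_⟩, (rho_conj c h2).trans (rho_lval c h1), ?_, ?_, ?_⟩
  · intro e he h0
    simp only [tL, List.mem_map] at he
    obtain ⟨f, hf, rfl⟩ := he
    exact hne f hf (tr_eq_nil h0 (h1.2 f hf))
  · have := St_count_tL (c := c) h1.2
    fin_cases c
    · simp at *; omega
    · simp; rw [St_count_tL' (by decide)]
  · have := St_count_tL (c := c) h1.2
    fin_cases c
    · simp; rw [St_count_tL' (by decide)]
    · simp at *; omega
  · simp [tL]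

theorem Mixed.two {X : List (Fin 2)} (h : Mixed X) : 0 < X.count 0 ∧ 0 < X.count 1 :=
  ⟨List.count_pos_iff.2 (h 0), List.count_pos_iff.2 (h 1)⟩

theorem Mixed.of_two {X : List (Fin 2)} (h : 0 < X.count 0 ∧ 0 < X.count 1) : Mixed X := by
  intro x
  fin_cases x
  · exact List.count_pos_iff.1 h.1
  · exact List.count_pos_iff.1 h.2

theorem Mixed.ne_nil {X : List (Fin 2)} (h : Mixed X) : X ≠ [] := by
  rintro rfl; simpa using h 0

theorem Mixed.ne_single {X : List (Fin 2)} (h : Mixed X) (c) : X ≠ [c] := by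
  rintro rfl
  have := h.two
  fin_cases c <;> simp at this

theorem Mixed.tr {X : List (Fin 2)} (h : Mixed X) (c) : Mixed (tr c X) := by
  apply Mixed.of_two
  have h1 := h.two
  have h2 := count_tr c X h.ne_nil
  rw [len_count X] at h2
  have hc : c = 0 ∨ c = 1 := by fin_cases c <;> simp
  rcases hc with rfl | rfl
  · have h3 := count_tr' 0 1 X (by decide)
    constructor <;> omega
  · have h3 := count_tr' 1 0 X (by decide)
    constructor <;> omega

theorem MR_cyclen {w A b B} (h : MR w A b B) : (cyclen w : ℤ) = A + b := by
  rcases h with ⟨-, h⟩ | ⟨L, h, -⟩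
  · exact SR_cyclen h
  · exact LR_cyclen h

theorem NR_cyclen {w A b B α} (h : NR w A b B α) : (cyclen w : ℤ) = A + b := by
  rcases h with ⟨-, -, h⟩ | ⟨L, h, -⟩
  · exact SR_cyclen h
  · exact LR_cyclen h

theorem MR_tau {w A b B} (h : MR w A b B) : MR (τ w) (A + b - B) b B := by
  rcases h with ⟨rfl, h⟩ | ⟨L, h, hM⟩
  · left; exact ⟨rfl, by simpa using SR_tau h⟩
  · right
    refine ⟨tL 0 L, LR_step 0 h fun e he => (hM e he).ne_single 0, ?_⟩
    intro e he
    simp only [tL, List.mem_map] at he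
    obtain ⟨f, hf, rfl⟩ := he
    exact (hM f hf).tr 0

theorem MR_sigma {w A b B} (h : MR w A b B) : MR (σ w) A (b + A - B) B := by
  rcases h with ⟨rfl, h⟩ | ⟨L, h, hM⟩
  · left; exact ⟨rfl, by simpa using SR_sigma h⟩
  · right
    refine ⟨tL 1 L, LR_step 1 h fun e he => (hM e he).ne_single 1, ?_⟩
    intro e he
    simp only [tL, List.mem_map] at he
    obtain ⟨f, hf, rfl⟩ := he
    exact (hM f hf).tr 1

theorem MR_NR {w A b B} (h : MR w A b B) : NR w A b B 0 := by
  rcases h with ⟨rfl, h⟩ | ⟨L, h, hM⟩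
  · left; exact ⟨rfl, rfl, h⟩
  · right
    refine ⟨L, h, fun e he => Or.inr (hM e he), ?_⟩
    have : St isA L = St (fun _ => 0) L :=
      St_congr fun e he => by simp [isA, (hM e he).ne_single 0]
    rw [this]; simp [St]

theorem NR_sigma {w A b B α} (h : NR w A b B α) : NR (σ w) A (b + A - B) B α := by
  rcases h with ⟨rfl, rfl, h⟩ | ⟨L, h, hM, rfl⟩
  · left; exact ⟨rfl, rfl, by simpa using SR_sigma h⟩
  · right
    refine ⟨tL 1 L, LR_step 1 h fun e he => ?_, ?_, ?_⟩
    · rcases hM e he with h | h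
      · rw [h]; decide
      · exact h.ne_single 1
    · intro e he
      simp only [tL, List.mem_map] at he
      obtain ⟨f, hf, rfl⟩ := he
      rcases hM f hf with h | h
      · left; simp [h, tr]
      · right; exact h.tr 1
    · rw [St_tL]
      congr 1
      apply St_congr
      intro e he
      rcases hM e he with h | h
      · simp [h, tr]
      · simp [isA, (h.tr 1).ne_single 0, h.ne_single 0]

theorem NR_tau {w A b B α} (h : NR w A b B α) : MR (τ w) (A + b - B) b (B - 2 * α) := by
  rcases h with ⟨rfl, rfl, h⟩ | ⟨L, ⟨h1, h2, rfl, rfl, rfl⟩, hM, rfl⟩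
  · left; exact ⟨rfl, by simpa using SR_tau h⟩
  · have hconj : IsConj (τ w) (lval (tL 0 L)) := (rho_conj 0 h2).trans (rho_lval 0 h1)
    have he : St emp (tL 0 L) = St isA L := by
      rw [St_tL]
      apply St_congr
      intro e he
      rcases hM e he with h | h
      · simp [h, tr, emp, isA]
      · simp [isA, emp, (h.tr 0).ne_nil, h.ne_single 0]
    have c0 := St_count_tL (c := 0) h1.2
    have c1 := St_count_tL' (c := 0) (x := 1) (L := L) (by decide)
    have hl : (tL 0 L).length = L.length := by simp [tL]
    rcases normalizeL _ (tL 0 L) rfl (CW_tL 0 h1) with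
      ⟨s, X, a1, a2, a3⟩ | ⟨L', a1, a2, a3, a4, -, a6⟩
    · left
      refine ⟨by omega, s, X, hconj.trans a1, ?_, ?_⟩
      · rw [a2]; omega
      · rw [a2]; omega
    · right
      refine ⟨L', ⟨a1, hconj.trans a2, ?_, ?_, ?_⟩, a6 ?_⟩
      · rw [a3]; omega
      · rw [a3]; omega
      · omega
      · intro e he hne
        simp only [tL, List.mem_map] at he
        obtain ⟨f, hf, rfl⟩ := he
        rcases hM f hf with h | h
        · simp [h, tr] at hne
        · exact h.tr 0

theorem MR_tau_pow {w A b B} (h : MR w A b B) (m : ℕ) :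
    MR ((τ ^ m) w) (A + m * (b - B)) b B := by
  induction m with
  | zero => simpa using h
  | succ m ih =>
    have := MR_tau ih
    rw [pow_succ', MulAut.mul_apply]
    convert this using 1
    push_cast; ring

theorem NR_final {w A b B α} (h : NR w A b B α) (m : ℕ) :
    (cyclen (σ ((τ ^ m) (σ w))) : ℤ) - cyclen ((τ ^ m) (σ w))
      = ((cyclen (σ ((τ ^ m) w)) : ℤ) - cyclen ((τ ^ m) w))
        + m * ((cyclen (σ w) : ℤ) - cyclen w) := by
  have hs := NR_sigma h
  cases m with
  | zero =>
    have hss := NR_sigma hs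
    simp only [pow_zero, MulAut.one_apply]
    rw [NR_cyclen hss, NR_cyclen hs, NR_cyclen h]
    push_cast; ring
  | succ m =>
    have e : ∀ x, (τ ^ (m + 1)) x = (τ ^ m) (τ x) := fun x => by
      rw [pow_succ, MulAut.mul_apply]
    rw [e, e]
    have h1 := MR_tau_pow (NR_tau hs) m
    have h2 := MR_tau_pow (NR_tau h) m
    rw [MR_cyclen (MR_sigma h1), MR_cyclen h1, MR_cyclen (MR_sigma h2), MR_cyclen h2,
      NR_cyclen hs, NR_cyclen h]
    push_cast; ring

/-- Bound on the number of letters in pure `b` blocks. -/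
def PR (w : F) (n : ℕ) : Prop := Pos w ∨ ∃ L, Strict L ∧ IsConj w (lval L) ∧ St pb L ≤ n

theorem Pos_rho {w : F} (c) (h : Pos w) : Pos (rho c w) := by
  obtain ⟨s, X, h⟩ := h
  exact ⟨s, im c X, by rw [← rho_single]; exact rho_conj c h⟩

theorem St_le {f g : List (Fin 2) → ℕ} {L : List Blk} (h : ∀ e ∈ L, f e.2 ≤ g e.2) :
    St f L ≤ St g L := List.sum_le_sum h

theorem pb_tr0 (X : List (Fin 2)) (hX : X ≠ []) : pb (tr 0 X) ≤ pb X := by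
  have h1 := count_tr 0 X hX
  have h2 := count_tr' 0 1 X (by decide)
  have h3 := len_count X
  have h4 := len_count (tr 0 X)
  unfold pb
  split_ifs <;> omega

theorem pb_tr1 (X : List (Fin 2)) (hX : X ≠ []) : pb (tr 1 X) ≤ pb X - 1 := by
  have h1 := count_tr 1 X hX
  have h2 := count_tr' 1 0 X (by decide)
  have h3 := len_count X
  have h4 := len_count (tr 1 X)
  unfold pb
  split_ifs <;> omega

theorem PR_rho {w n n'} (c : Fin 2) (h : PR w n)
    (hn : ∀ L : List Blk, (∀ e ∈ L, e.2 ≠ []) → St pb L ≤ n → St pb (tL c L) ≤ n') :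
    PR (rho c w) n' := by
  rcases h with h | ⟨L, h1, h2, h3⟩
  · exact Or.inl (Pos_rho c h)
  · have hconj : IsConj (rho c w) (lval (tL c L)) := (rho_conj c h2).trans (rho_lval c h1)
    rcases normalizeL _ (tL c L) rfl (CW_tL c h1) with
      ⟨s, X, a1, -⟩ | ⟨L', a1, a2, -, -, a5, -⟩
    · exact Or.inl ⟨s, X, hconj.trans a1⟩
    · exact Or.inr ⟨L', a1, hconj.trans a2, a5.trans (hn L h1.2 h3)⟩

theorem PR_tau {w n} (h : PR w n) : PR (τ w) n :=
  PR_rho 0 h fun L hL hp => by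
    rw [St_tL]
    exact (St_le fun e he => pb_tr0 e.2 (hL e he)).trans hp

theorem PR_sigma {w n} (h : PR w n) : PR (σ w) (n - 1) :=
  PR_rho 1 h fun L hL hp => by
    rw [St_tL]
    have : St (fun X => pb (tr 1 X)) L ≤ St pb L - 1 := by
      clear hp
      induction L with
      | nil => simp
      | cons e l ih =>
        have h1 := pb_tr1 e.2 (hL e (by simp))
        have h2 := ih fun f hf => hL f (by simp [hf])
        simp only [St_cons]
        omega
    omega

theorem PR_init (u : F) : PR u (cyclen u) := by
  rcases exists_rep u with h | ⟨L, h1, h2⟩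
  · exact Or.inl h
  · refine Or.inr ⟨L, h1, h2, ?_⟩
    rw [cyclen_conj h2, cyclen_strict h1]
    exact St_le fun e _ => by unfold pb; split_ifs <;> simp

theorem PR_NR {w} (h : PR w 0) : ∃ A b B α, NR (σ w) A b B α := by
  rcases h with ⟨s, X, h⟩ | ⟨L, h1, h2, h3⟩
  · exact ⟨_, _, 0, 0, Or.inl ⟨rfl, rfl, SR_sigma ⟨s, X, h, rfl, rfl⟩⟩⟩
  · have hp : ∀ e ∈ L, pb e.2 = 0 := by
      intro e he
      have : pb e.2 ≤ St pb L := List.single_le_sum (by simp) _ (List.mem_map_of_mem he)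
      omega
    have h0 : ∀ e ∈ L, 0 < e.2.count 0 := by
      intro e he
      have := hp e he
      have h4 : 0 < e.2.length := List.length_pos_iff.2 (h1.2 e he)
      unfold pb at this
      split_ifs at this <;> omega
    have hL : LR w _ _ _ L := ⟨h1, h2, rfl, rfl, rfl⟩
    refine ⟨_, _, _, _, Or.inr ⟨tL 1 L, LR_step 1 hL fun e he h => ?_, ?_, rfl⟩⟩
    · have := h0 e he
      rw [h] at this
      simp at this
    · intro e he
      simp only [tL, List.mem_map] at he
      obtain ⟨f, hf, rfl⟩ := he
      have a0 := h0 f hf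
      have a1 := count_tr 1 f.2 (h1.2 f hf)
      have a2 := count_tr' 1 0 f.2 (by decide)
      have a3 := len_count f.2
      by_cases hz : (tr 1 f.2).count 1 = 0
      · left
        have a4 : f.2.length = 1 := by omega
        obtain ⟨x, hx⟩ := List.length_eq_one_iff.1 a4
        rw [hx] at a0 ⊢
        fin_cases x
        · simp [tr]
        · simp at a0
      · right
        have a5 : 0 < (tr 1 f.2).count 0 ∧ 0 < (tr 1 f.2).count 1 := ⟨by omega, by omega⟩
        exact Mixed.of_two a5

/-- Progress measure along a chain. -/
def Zs (w : F) : ℕ → Prop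
  | 0 => ∃ A b B α, NR w A b B α
  | k + 1 => PR w k

theorem Zs_tau {w k} (h : Zs w k) : Zs (τ w) k := by
  cases k with
  | zero =>
    obtain ⟨A, b, B, α, h⟩ := h
    exact ⟨_, _, _, _, MR_NR (NR_tau h)⟩
  | succ k => exact PR_tau h

theorem Zs_sigma {w k} (h : Zs w k) : Zs (σ w) (k - 1) := by
  cases k with
  | zero =>
    obtain ⟨A, b, B, α, h⟩ := h
    exact ⟨_, _, _, _, NR_sigma h⟩
  | succ k =>
    cases k with
    | zero => exact PR_NR h
    | succ k => exact PR_sigma h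

theorem Zs_tau_pow {w k} (h : Zs w k) (m : ℕ) : Zs ((τ ^ m) w) k := by
  induction m with
  | zero => simpa using h
  | succ m ih => rw [pow_succ', MulAut.mul_apply]; exact Zs_tau ih

theorem Zs_sigma_pow {w k} (h : Zs w k) (m : ℕ) : Zs ((σ ^ m) w) (k - m) := by
  induction m with
  | zero => simpa using h
  | succ m ih => rw [pow_succ', MulAut.mul_apply]; exact Zs_sigma ih

theorem Zs_chain {u k} (h : Zs u k) (c : List (ℕ × ℕ)) :
    Zs (chainC1 c u) (k - sigmaCount c) := by
  induction c with
  | nil => simpa [chainC1, sigmaCount] using h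
  | cons p c ih =>
    have h1 := Zs_tau_pow (Zs_sigma_pow ih p.1) p.2
    have h2 : k - sigmaCount (p :: c) = k - sigmaCount c - p.1 := by
      simp [sigmaCount]; omega
    have h3 : chainC1 (p :: c) u = (τ ^ p.2) ((σ ^ p.1) (chainC1 c u)) := by
      simp [chainC1, MulAut.mul_apply]
    rw [h2, h3]
    exact h1

/-- Lemma 4.1 (i). -/
theorem stmt3 (u : F) (m : ℕ) (c₁ : List (ℕ × ℕ)) (hne : c₁ ≠ [])
    (hσ : cyclen u + 1 ≤ sigmaCount c₁) :
    (cyclen (σ ((τ ^ m * σ * chainC1 c₁) u)) : ℤ) - cyclen ((τ ^ m * σ * chainC1 c₁) u)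
      = ((cyclen (σ ((τ ^ m * chainC1 c₁) u)) : ℤ) - cyclen ((τ ^ m * chainC1 c₁) u))
        + m * ((cyclen (σ (chainC1 c₁ u)) : ℤ) - cyclen (chainC1 c₁ u)) := by
  have h : Zs (chainC1 c₁ u) 0 := by
    have h1 : Zs u (cyclen u + 1) := PR_init u
    have h2 := Zs_chain h1 c₁
    rwa [Nat.sub_eq_zero_of_le hσ] at h2
  obtain ⟨A, b, B, α, h⟩ := h
  simpa only [MulAut.mul_apply] using NR_final h m
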